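/- There exists a universal constant C such that the following holds. Let g : ℝ^n → ℝ be a polynomial of degree at most d, where d ≥ 2. Fix parameters R ≥ 1, 0 < ε ≤ 1, 0 < β < 1, and assume 0 ≤ λ ≤ (ε/R²)·(β/d)^{C·log d}. Then for x ∼ N(0,1)^n, except with probability at most β, the zoomed polynomial g_{λ|x} is (R,ε)-attenuated; i.e., HyperVar_R[g_{λ|x}] ≤ ε·‖g_{λ|x}‖₂². -/

import Mathlib

open MeasureTheory ProbabilityTheory MvPolynomial

/-- The standard Gaussian measure `N(0,1)^n` on `ℝ^n`. -/
noncomputable def gaussianN (n : ℕ) : Measure (Fin n → ℝ) :=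
  Measure.pi fun _ => gaussianReal 0 1

/-- The normalized probabilists' Hermite polynomial `h_k = H_k / √(k!)`. -/
noncomputable def hermiteFn (k : ℕ) (t : ℝ) : ℝ :=
  ((Polynomial.hermite k).map (Int.castRingHom ℝ)).eval t / Real.sqrt (Nat.factorial k)

/-- The multivariate Hermite polynomial `h_α(x) = ∏ i, h_{α i}(x i)`. -/
noncomputable def hermiteMv {n : ℕ} (α : Fin n → ℕ) (x : Fin n → ℝ) : ℝ :=
  ∏ i, hermiteFn (α i) (x i)

/-- Hermite coefficient `f̂(α) = E_{x ∼ N(0,1)^n}[f(x)·h_α(x)]` of a function. -/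
noncomputable def hermiteCoeffF {n : ℕ} (f : (Fin n → ℝ) → ℝ) (α : Fin n → ℕ) : ℝ :=
  ∫ x, f x * hermiteMv α x ∂(gaussianN n)

/-- Hermite coefficient `ĝ(α)` of a polynomial. -/
noncomputable def hermiteCoeff {n : ℕ} (g : MvPolynomial (Fin n) ℝ) (α : Fin n → ℕ) : ℝ :=
  hermiteCoeffF (fun x => eval x g) α

/-- The squared Gaussian 2-norm `‖g‖₂² = E_{x ∼ N(0,1)^n}[g(x)²]`. -/
noncomputable def norm2sq {n : ℕ} (g : MvPolynomial (Fin n) ℝ) : ℝ :=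
  ∫ x, (eval x g) ^ 2 ∂(gaussianN n)

/-- The `λ`-zoom of `g` at `x`: `g_{λ|x}(y) = g(√(1-λ)·x + √λ·y)`, as a polynomial in `y`. -/
noncomputable def zoom {n : ℕ} (g : MvPolynomial (Fin n) ℝ) (lam : ℝ) (x : Fin n → ℝ) :
    MvPolynomial (Fin n) ℝ :=
  aeval (fun i => C (Real.sqrt (1 - lam) * x i) + C (Real.sqrt lam) * X i) g

/-- `HyperVar_R[g^{≥m}] = Σ_{|α| ≥ m} R^{2|α|}·ĝ(α)²`. -/
noncomputable def hyperVarGE {n : ℕ} (R : ℝ) (m : ℕ) (g : MvPolynomial (Fin n) ℝ) : ℝ :=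
  ∑' α : Fin n → ℕ, if m ≤ ∑ i, α i then R ^ (2 * ∑ i, α i) * hermiteCoeff g α ^ 2 else 0

/-- `HyperVar_R[g] = Σ_{α ≠ 0} R^{2|α|}·ĝ(α)²`. -/
noncomputable def hyperVar {n : ℕ} (R : ℝ) (g : MvPolynomial (Fin n) ℝ) : ℝ :=
  hyperVarGE R 1 g

/-- A nice distribution of polynomials of degree at most `d` on `ℝ^n`, indexed by
`υ ∈ ℝ^I`: each `g υ` has degree at most `d` and each coefficient of `g υ` is a
polynomial of degree at most `d` in `υ`. -/
def NiceFamily (n I d : ℕ) (g : (Fin I → ℝ) → MvPolynomial (Fin n) ℝ) : Prop :=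
  (∀ υ, (g υ).totalDegree ≤ d) ∧
  ∀ m : Fin n →₀ ℕ, ∃ P : MvPolynomial (Fin I) ℝ,
    P.totalDegree ≤ d ∧ ∀ υ, coeff m (g υ) = eval υ P

/-- Polynomials are integrable with respect to the standard Gaussian measure on `ℝ`. -/
lemma integrable_eval_gaussianReal (p : Polynomial ℝ) :
    Integrable (fun t => p.eval t) (gaussianReal 0 1) := by
  induction p using Polynomial.induction_on' with
  | add p q hp hq =>
    simp only [Polynomial.eval_add]
    exact hp.add hq
  | monomial k a =>
    simp only [Polynomial.eval_monomial]
    refine Integrable.const_mul ?_ a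
    have h := (memLp_id_gaussianReal (μ := 0) (v := 1) k).integrable_norm_pow'
    rw [← integrable_norm_iff (by fun_prop)]
    simpa using h

/-- Gaussian integration by parts for polynomials. -/
lemma integral_mul_eval_gaussianReal (p : Polynomial ℝ) :
    ∫ t, t * p.eval t ∂(gaussianReal 0 1) = ∫ t, p.derivative.eval t ∂(gaussianReal 0 1) := by
  have hint : ∀ q : Polynomial ℝ,
      Integrable (fun t => q.eval t * gaussianPDFReal 0 1 t) := by
    intro q
    have h := integrable_eval_gaussianReal q
    rw [gaussianReal_of_var_ne_zero 0 one_ne_zero,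
      integrable_withDensity_iff_integrable_smul' (measurable_gaussianPDF 0 1)
        (ae_of_all _ fun _ => gaussianPDF_lt_top)] at h
    simpa [toReal_gaussianPDF, mul_comm] using h
  have hd : ∀ t, HasDerivAt (gaussianPDFReal 0 1) (-(t * gaussianPDFReal 0 1 t)) t := by
    intro t
    have h : HasDerivAt (fun x : ℝ => (√(2 * Real.pi * 1))⁻¹ * Real.exp (-x ^ 2 / 2))
        ((√(2 * Real.pi * 1))⁻¹ * (Real.exp (-t ^ 2 / 2) * (-(2 * t) / 2))) t := by
      have := (((hasDerivAt_pow 2 t).neg.div_const 2).exp).const_mul ((√(2 * Real.pi * 1))⁻¹)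
      simpa using this
    have e : gaussianPDFReal 0 1 = fun x : ℝ => (√(2 * Real.pi * 1))⁻¹ * Real.exp (-x ^ 2 / 2) := by
      ext x; simp [gaussianPDFReal]
    rw [e]
    convert h using 1
    ring
  have key := integral_mul_deriv_eq_deriv_mul_of_integrable
    (u := fun t => p.eval t) (v := gaussianPDFReal 0 1) (u' := fun t => p.derivative.eval t)
    (v' := fun t => -(t * gaussianPDFReal 0 1 t)) (fun t _ => p.hasDerivAt t) (fun t _ => hd t)
    (by
      have := (hint (p * Polynomial.X)).neg
      refine this.congr (ae_of_all _ fun t => ?_)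
      simp only [Pi.neg_apply, Pi.mul_apply, Polynomial.eval_mul, Polynomial.eval_X]
      ring)
    (hint p.derivative) (hint p)
  rw [integral_gaussianReal_eq_integral_smul one_ne_zero,
    integral_gaussianReal_eq_integral_smul one_ne_zero]
  simp only [smul_eq_mul]
  have e1 : ∀ t, gaussianPDFReal 0 1 t * (t * p.eval t)
      = -(p.eval t * -(t * gaussianPDFReal 0 1 t)) := fun t => by ring
  simp only [e1, integral_neg, key, neg_neg, mul_comm]

lemma integral_pow_add_two_gaussianReal (k : ℕ) :
    ∫ t, t ^ (k + 2) ∂(gaussianReal 0 1) = (k + 1) * ∫ t, t ^ k ∂(gaussianReal 0 1) := by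
  have h := integral_mul_eval_gaussianReal (Polynomial.X ^ (k + 1))
  simp only [Polynomial.eval_pow, Polynomial.eval_X, Polynomial.derivative_X_pow,
    Polynomial.eval_mul, Polynomial.eval_C, Nat.add_sub_cancel] at h
  rw [integral_const_mul] at h
  rw [← Nat.cast_succ, ← h]
  congr 1
  ext t
  ring

/-- The pairing `E[t ^ l * h_k(t)]` of a monomial with a normalized Hermite polynomial. -/
noncomputable def hermiteMoment (l k : ℕ) : ℝ :=
  ∫ t, t ^ l * hermiteFn k t ∂(gaussianReal 0 1)

/-- The real polynomial underlying `hermiteFn`. -/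
noncomputable def hermitePoly (k : ℕ) : Polynomial ℝ :=
  (Polynomial.hermite k).map (Int.castRingHom ℝ) * Polynomial.C (√(Nat.factorial k))⁻¹

lemma eval_hermitePoly (k : ℕ) (t : ℝ) : (hermitePoly k).eval t = hermiteFn k t := by
  simp [hermitePoly, hermiteFn, div_eq_mul_inv]

lemma hermitePoly_succ (k : ℕ) :
    Polynomial.C (√((k : ℝ) + 1)) * hermitePoly (k + 1) =
      Polynomial.X * hermitePoly k - (hermitePoly k).derivative := by
  have h : √((k : ℝ) + 1) ≠ 0 := by positivity
  have e : Polynomial.C (√((k : ℝ) + 1)) * Polynomial.C (√((k + 1).factorial : ℝ))⁻¹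
      = Polynomial.C (√(k.factorial : ℝ))⁻¹ := by
    rw [← Polynomial.C_mul, Nat.factorial_succ]
    push_cast
    rw [Real.sqrt_mul (by positivity), mul_inv, mul_inv_cancel_left₀ h]
  simp only [hermitePoly, Polynomial.hermite_succ, Polynomial.map_sub, Polynomial.map_mul,
    Polynomial.map_X, Polynomial.derivative_mul, Polynomial.derivative_C, Polynomial.derivative_map,
    mul_zero, add_zero]
  rw [mul_left_comm, e]
  ring

lemma sqrt_mul_hermiteMoment_succ (l k : ℕ) :
    √((k : ℝ) + 1) * hermiteMoment l (k + 1) = l * hermiteMoment (l - 1) k := by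
  have h := integral_mul_eval_gaussianReal (Polynomial.X ^ l * hermitePoly k)
  have i1 := integrable_eval_gaussianReal (Polynomial.X ^ l * (hermitePoly k).derivative)
  have i2 := integrable_eval_gaussianReal
    (Polynomial.X * (Polynomial.X ^ l * hermitePoly k))
  have i3 := integrable_eval_gaussianReal (Polynomial.X ^ (l - 1) * hermitePoly k)
  simp only [Polynomial.derivative_mul, Polynomial.derivative_X_pow, Polynomial.eval_add,
    Polynomial.eval_mul, Polynomial.eval_pow, Polynomial.eval_X,
    Polynomial.eval_C, eval_hermitePoly] at h i1 i2 i3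
  simp only [mul_assoc] at h
  rw [integral_add (i3.const_mul _) i1, integral_const_mul] at h
  simp only [hermiteMoment]
  rw [← integral_const_mul, eq_sub_of_add_eq h.symm, ← integral_sub i2 i1]
  congr 1
  ext t
  have := congrArg (Polynomial.eval t) (hermitePoly_succ k)
  simp only [Polynomial.eval_mul, Polynomial.eval_sub, Polynomial.eval_X,
    Polynomial.eval_C, eval_hermitePoly] at this
  linear_combination (t ^ l) * this

lemma hermiteMoment_eq_zero {l k : ℕ} (h : l < k) : hermiteMoment l k = 0 := by
  induction k generalizing l with
  | zero => omega
  | succ k ih =>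
    have h1 := sqrt_mul_hermiteMoment_succ l k
    have h2 : √((k : ℝ) + 1) ≠ 0 := by positivity
    rcases Nat.eq_zero_or_pos l with rfl | hl
    · simpa [h2] using h1
    · rw [ih (by omega), mul_zero] at h1
      exact (mul_eq_zero.mp h1).resolve_left h2

/-- The polynomial `x ↦ E[(a x + b t) ^ m * h_k(t)]`, see `eval_zoomPoly`. -/
noncomputable def zoomPoly (a b : ℝ) (m k : ℕ) : Polynomial ℝ :=
  ∑ j ∈ Finset.range (m + 1),
    Polynomial.monomial j ((m.choose j) * a ^ j * b ^ (m - j) * hermiteMoment (m - j) k)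

lemma coeff_zoomPoly (a b : ℝ) (m k j : ℕ) :
    (zoomPoly a b m k).coeff j =
      (m.choose j) * a ^ j * b ^ (m - j) * hermiteMoment (m - j) k := by
  simp only [zoomPoly, Polynomial.finsetSum_coeff, Polynomial.coeff_monomial,
    Finset.sum_ite_eq', Finset.mem_range]
  split_ifs with h
  · rfl
  · rw [Nat.choose_eq_zero_of_lt (by omega)]
    simp

lemma natDegree_zoomPoly_le (a b : ℝ) (m k : ℕ) : (zoomPoly a b m k).natDegree ≤ m := by
  rw [Polynomial.natDegree_le_iff_coeff_eq_zero]
  intro N hN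
  rw [coeff_zoomPoly, Nat.choose_eq_zero_of_lt hN]
  simp

lemma zoomPoly_eq_zero (a b : ℝ) {m k : ℕ} (h : m < k) : zoomPoly a b m k = 0 := by
  ext j
  rw [coeff_zoomPoly, hermiteMoment_eq_zero (by omega)]
  simp

lemma C_mul_derivative_zoomPoly (a b : ℝ) (m k : ℕ) :
    Polynomial.C b * (zoomPoly a b m k).derivative =
      Polynomial.C (a * √((k : ℝ) + 1)) * zoomPoly a b m (k + 1) := by
  ext j
  rw [Polynomial.coeff_C_mul, Polynomial.coeff_C_mul, Polynomial.coeff_derivative,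
    coeff_zoomPoly, coeff_zoomPoly]
  have h1 := sqrt_mul_hermiteMoment_succ (m - j) k
  have h2 : (m.choose (j + 1) : ℝ) * (j + 1) = m.choose j * ((m - j : ℕ) : ℝ) := by
    exact_mod_cast Nat.choose_succ_right_eq m j
  rcases Nat.lt_or_ge j m with hj | hj
  · obtain ⟨r, rfl⟩ := Nat.exists_eq_add_of_lt hj
    have e1 : j + r + 1 - j = r + 1 := by omega
    have e2 : j + r + 1 - (j + 1) = r := by omega
    rw [e1] at h1 h2 ⊢
    rw [e2]
    simp only [Nat.add_sub_cancel] at h1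
    linear_combination (b ^ (r + 1) * a ^ (j + 1) * hermiteMoment r k) * h2
      - (((j + r + 1).choose j : ℝ) * a ^ (j + 1) * b ^ (r + 1)) * h1
  · rw [Nat.choose_eq_zero_of_lt (by omega), Nat.sub_eq_zero_of_le hj,
      hermiteMoment_eq_zero (Nat.succ_pos k)]
    simp

lemma eval_zoomPoly (a b : ℝ) (m k : ℕ) (x : ℝ) :
    (zoomPoly a b m k).eval x =
      ∫ t, (a * x + b * t) ^ m * hermiteFn k t ∂(gaussianReal 0 1) := by
  have hi : ∀ l, Integrable (fun t => t ^ l * hermiteFn k t) (gaussianReal 0 1) := by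
    intro l
    have := integrable_eval_gaussianReal (Polynomial.X ^ l * hermitePoly k)
    simpa [eval_hermitePoly] using this
  have e : ∀ t : ℝ, (a * x + b * t) ^ m * hermiteFn k t =
      ∑ j ∈ Finset.range (m + 1),
        ((a * x) ^ j * b ^ (m - j) * m.choose j) * (t ^ (m - j) * hermiteFn k t) := by
    intro t
    rw [add_pow, Finset.sum_mul]
    refine Finset.sum_congr rfl fun j _ => ?_
    rw [mul_pow b]
    ring
  simp only [e]
  rw [integral_finsetSum _ fun j _ => (hi _).const_mul _]
  simp only [integral_const_mul, zoomPoly, Polynomial.eval_finsetSum, Polynomial.eval_monomial,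
    hermiteMoment]
  refine Finset.sum_congr rfl fun j _ => ?_
  rw [mul_pow]
  ring

/-- The Hermite coefficient at `α` of `y ↦ g(a x + b y)`, as a polynomial in `x`. -/
noncomputable def zoomCoeff {n : ℕ} (a b : ℝ) (g : MvPolynomial (Fin n) ℝ) (α : Fin n → ℕ) :
    MvPolynomial (Fin n) ℝ :=
  ∑ m ∈ g.support, C (coeff m g) * ∏ i, Polynomial.aeval (X i) (zoomPoly a b (m i) (α i))

lemma eval_aeval_X {n : ℕ} (i : Fin n) (p : Polynomial ℝ) (x : Fin n → ℝ) :
    eval x (Polynomial.aeval (X i : MvPolynomial (Fin n) ℝ) p) = p.eval (x i) := by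
  induction p using Polynomial.induction_on' with
  | add p q hp hq => simp [hp, hq]
  | monomial k a => simp [Polynomial.aeval_monomial, algebraMap_eq]

lemma totalDegree_aeval_X_le {n : ℕ} (i : Fin n) (p : Polynomial ℝ) :
    (Polynomial.aeval (X i : MvPolynomial (Fin n) ℝ) p).totalDegree ≤ p.natDegree := by
  rw [Polynomial.aeval_eq_sum_range]
  refine totalDegree_finsetSum_le fun j hj => ?_
  refine (totalDegree_smul_le _ _).trans ((totalDegree_X_pow i j).le.trans ?_)
  simpa [Nat.lt_succ_iff] using hj

lemma sum_le_totalDegree {n : ℕ} {g : MvPolynomial (Fin n) ℝ} {m : Fin n →₀ ℕ}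
    (hm : m ∈ g.support) : ∑ i, m i ≤ g.totalDegree := by
  have := le_totalDegree hm
  rwa [Finsupp.sum_fintype _ _ fun _ => rfl] at this

lemma totalDegree_zoomCoeff_le {n : ℕ} (a b : ℝ) (g : MvPolynomial (Fin n) ℝ) (α : Fin n → ℕ) :
    (zoomCoeff a b g α).totalDegree ≤ g.totalDegree := by
  refine totalDegree_finsetSum_le fun m hm => ?_
  refine (totalDegree_mul _ _).trans ?_
  rw [totalDegree_C, zero_add]
  refine (totalDegree_finsetProd _ _).trans (le_trans ?_ (sum_le_totalDegree hm))
  exact Finset.sum_le_sum fun i _ =>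
    (totalDegree_aeval_X_le i _).trans (natDegree_zoomPoly_le a b _ _)

lemma zoomCoeff_eq_zero {n : ℕ} (a b : ℝ) {g : MvPolynomial (Fin n) ℝ} {α : Fin n → ℕ}
    (h : g.totalDegree < ∑ i, α i) : zoomCoeff a b g α = 0 := by
  refine Finset.sum_eq_zero fun m hm => ?_
  obtain ⟨i, -, hi⟩ := Finset.exists_lt_of_sum_lt ((sum_le_totalDegree hm).trans_lt h)
  rw [Finset.prod_eq_zero (Finset.mem_univ i), mul_zero]
  rw [zoomPoly_eq_zero a b hi, map_zero]

lemma pderiv_aeval_X {n : ℕ} (i j : Fin n) (p : Polynomial ℝ) :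
    pderiv i (Polynomial.aeval (X j : MvPolynomial (Fin n) ℝ) p) =
      if j = i then Polynomial.aeval (X i) p.derivative else 0 := by
  rw [Derivation.map_aeval, pderiv_X]
  split_ifs with h
  · subst h; simp
  · simp [Ne.symm h]

lemma C_mul_pderiv_zoomCoeff {n : ℕ} (a b : ℝ) (g : MvPolynomial (Fin n) ℝ) (α : Fin n → ℕ)
    (i : Fin n) :
    C b * pderiv i (zoomCoeff a b g α) =
      C (a * √((α i : ℝ) + 1)) * zoomCoeff a b g (α + Pi.single i 1) := by
  simp only [zoomCoeff, map_sum, Finset.mul_sum]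
  refine Finset.sum_congr rfl fun m _ => ?_
  rw [pderiv_C_mul, ← Finset.mul_prod_erase _ _ (Finset.mem_univ i),
    ← Finset.mul_prod_erase _ _ (Finset.mem_univ i), pderiv_mul, pderiv_aeval_X, if_pos rfl]
  have h0 : pderiv i (∏ j ∈ Finset.univ.erase i,
      Polynomial.aeval (X j : MvPolynomial (Fin n) ℝ) (zoomPoly a b (m j) (α j))) = 0 := by
    refine Finset.prod_induction _ (fun p => pderiv i p = 0) ?_ pderiv_one fun j hj => ?_
    · intro p q hp hq
      rw [pderiv_mul, hp, hq]
      simp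
    · rw [pderiv_aeval_X, if_neg (Finset.ne_of_mem_erase hj)]
  have h1 : ∏ j ∈ Finset.univ.erase i, Polynomial.aeval (X j : MvPolynomial (Fin n) ℝ)
        (zoomPoly a b (m j) ((α + Pi.single i 1 : Fin n → ℕ) j)) =
      ∏ j ∈ Finset.univ.erase i,
        Polynomial.aeval (X j : MvPolynomial (Fin n) ℝ) (zoomPoly a b (m j) (α j)) := by
    refine Finset.prod_congr rfl fun j hj => ?_
    simp [Pi.single_eq_of_ne (Finset.ne_of_mem_erase hj)]
  have h2 := congrArg (Polynomial.aeval (X i : MvPolynomial (Fin n) ℝ))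
    (C_mul_derivative_zoomPoly a b (m i) (α i))
  simp only [map_mul, Polynomial.aeval_C, algebraMap_eq] at h2
  rw [h0, h1, mul_zero, add_zero]
  simp only [Pi.add_apply, Pi.single_eq_same, map_mul]
  linear_combination (C (coeff m g) * ∏ j ∈ Finset.univ.erase i,
        Polynomial.aeval (X j : MvPolynomial (Fin n) ℝ) (zoomPoly a b (m j) (α j))) * h2

lemma eval_zoom {n : ℕ} (g : MvPolynomial (Fin n) ℝ) (lam : ℝ) (x y : Fin n → ℝ) :
    eval y (zoom g lam x) = eval (fun i => √(1 - lam) * x i + √lam * y i) g := by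
  simp only [zoom]
  induction g using MvPolynomial.induction_on with
  | C r => simp
  | add p q hp hq => simp only [map_add, hp, hq]
  | mul_X p i hp => rw [map_mul, map_mul, map_mul, hp]; simp

lemma eval_zoomCoeff {n : ℕ} (g : MvPolynomial (Fin n) ℝ) (lam : ℝ) (x : Fin n → ℝ)
    (α : Fin n → ℕ) :
    eval x (zoomCoeff √(1 - lam) √lam g α) = hermiteCoeff (zoom g lam x) α := by
  set a := √(1 - lam)
  set b := √lam
  have hi : ∀ m : Fin n →₀ ℕ, Integrable
      (fun y : Fin n → ℝ => ∏ i, ((a * x i + b * y i) ^ m i * hermiteFn (α i) (y i)))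
      (gaussianN n) := by
    intro m
    refine Integrable.fintype_prod
      (f := fun i (t : ℝ) => (a * x i + b * t) ^ m i * hermiteFn (α i) t) fun i => ?_
    have := integrable_eval_gaussianReal
      ((Polynomial.C (a * x i) + Polynomial.C b * Polynomial.X) ^ m i * hermitePoly (α i))
    simpa [eval_hermitePoly] using this
  have e : ∀ y : Fin n → ℝ, eval y (zoom g lam x) * hermiteMv α y =
      ∑ m ∈ g.support, coeff m g *
        ∏ i, ((a * x i + b * y i) ^ m i * hermiteFn (α i) (y i)) := by
    intro y
    rw [eval_zoom, eval_eq', Finset.sum_mul]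
    refine Finset.sum_congr rfl fun m _ => ?_
    rw [hermiteMv, Finset.prod_mul_distrib, mul_assoc]
  simp only [hermiteCoeff, hermiteCoeffF, e]
  rw [integral_finsetSum _ fun m _ => (hi m).const_mul _]
  simp only [zoomCoeff, map_sum, map_mul, eval_C, map_prod, eval_aeval_X]
  refine Finset.sum_congr rfl fun m _ => ?_
  rw [integral_const_mul, gaussianN, integral_fintype_prod_eq_prod
    (fun i (t : ℝ) => (a * x i + b * t) ^ m i * hermiteFn (α i) t)]
  simp only [eval_zoomPoly]

section GaussianChaos

variable {ι : Type*} [Fintype ι]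

/-- The law of a linear form under the standard Gaussian measure. -/
lemma map_sum_mul_pi_gaussianReal (a : ι → ℝ) :
    (Measure.pi fun _ : ι => gaussianReal 0 1).map (fun z => ∑ i, a i * z i) =
      (gaussianReal 0 1).map (fun t => √(∑ i, a i ^ 2) * t) := by
  set μ := Measure.pi fun _ : ι => gaussianReal 0 1
  have hmeas : ∀ i, Measurable fun t : ℝ => a i * t := fun i => by fun_prop
  have hlaw : ∀ i, HasGaussianLaw (fun z : ι → ℝ => a i * z i) μ := fun i => by
    have h1 : μ.map (fun z => z i) = gaussianReal 0 1 :=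
      (measurePreserving_eval (fun _ : ι => gaussianReal 0 1) i).map_eq
    refine ⟨?_⟩
    have : μ.map (fun z => a i * z i) = (gaussianReal 0 1).map (fun t => a i * t) := by
      rw [← h1, Measure.map_map (hmeas i) (measurable_pi_apply i)]
      rfl
    rw [this, gaussianReal_map_const_mul]
    infer_instance
  have hind : iIndepFun (fun i (z : ι → ℝ) => a i * z i) μ :=
    iIndepFun_pi (X := fun i (t : ℝ) => a i * t) fun i => (hmeas i).aemeasurable
  have hsum := hind.hasGaussianLaw_fun_sum hlaw
  rw [hsum.map_eq_gaussianReal, gaussianReal_map_const_mul]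
  have hid : MemLp (fun t : ℝ => t) 2 (gaussianReal 0 1) := memLp_id_gaussianReal 2
  have hint : ∀ i, Integrable (fun z : ι → ℝ => a i * z i) μ := fun i => (hlaw i).integrable
  have hmean : ∫ z, ∑ i, a i * z i ∂μ = 0 := by
    rw [integral_finsetSum _ fun i _ => hint i]
    refine Finset.sum_eq_zero fun i _ => ?_
    rw [integral_const_mul, integral_comp_eval (μ := fun _ : ι => gaussianReal 0 1)
      (f := fun t : ℝ => t) (by fun_prop), integral_id_gaussianReal, mul_zero]
  have hvar : Var[fun z => ∑ i, a i * z i; μ] = ∑ i, a i ^ 2 := by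
    have h := variance_sum_pi (μ := fun _ : ι => gaussianReal 0 1)
      (X := fun i (t : ℝ) => a i * t) fun i => hid.const_mul (a i)
    have e : (∑ i, fun ω : ι → ℝ => a i * ω i) = fun z => ∑ i, a i * z i := by
      ext z; simp
    rw [e] at h
    rw [h]
    refine Finset.sum_congr rfl fun i _ => ?_
    rw [variance_const_mul, variance_fun_id_gaussianReal]
    simp
  rw [hmean, hvar]
  congr 1
  · simp
  · ext
    rw [Real.coe_toNNReal _ (by positivity)]
    simp [Real.sq_sqrt (show 0 ≤ ∑ i, a i ^ 2 by positivity)]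

lemma integrable_linearForm_pow (a : ι → ℝ) (k : ℕ) :
    Integrable (fun z => (∑ i, a i * z i) ^ k) (Measure.pi fun _ : ι => gaussianReal 0 1) := by
  have h := integrable_map_measure (μ := Measure.pi fun _ : ι => gaussianReal 0 1)
    (f := fun z : ι → ℝ => ∑ i, a i * z i) (g := fun t : ℝ => t ^ k)
    (by fun_prop) (Measurable.aemeasurable (by fun_prop))
  refine h.mp ?_
  rw [map_sum_mul_pi_gaussianReal, integrable_map_measure (by fun_prop) (by fun_prop)]
  have := integrable_eval_gaussianReal
    ((Polynomial.C √(∑ i, a i ^ 2) * Polynomial.X) ^ k)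
  simpa [Function.comp_def] using this

lemma integral_linearForm_pow (a : ι → ℝ) (k : ℕ) :
    ∫ z, (∑ i, a i * z i) ^ k ∂(Measure.pi fun _ : ι => gaussianReal 0 1) =
      √(∑ i, a i ^ 2) ^ k * ∫ t, t ^ k ∂(gaussianReal 0 1) := by
  rw [← integral_map (φ := fun z : ι → ℝ => ∑ i, a i * z i) (f := fun t : ℝ => t ^ k)
    (Measurable.aemeasurable (by fun_prop)) (by fun_prop), map_sum_mul_pi_gaussianReal,
    integral_map (by fun_prop) (by fun_prop), ← integral_const_mul]
  simp only [mul_pow]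

lemma integral_linearForm_sq (a : ι → ℝ) :
    ∫ z, (∑ i, a i * z i) ^ 2 ∂(Measure.pi fun _ : ι => gaussianReal 0 1) = ∑ i, a i ^ 2 := by
  have h := integral_pow_add_two_gaussianReal 0
  simp only [zero_add, pow_zero, integral_const] at h
  rw [integral_linearForm_pow, h, Real.sq_sqrt (by positivity)]
  simp

lemma integral_linearForm_pow_four (a : ι → ℝ) :
    ∫ z, (∑ i, a i * z i) ^ 4 ∂(Measure.pi fun _ : ι => gaussianReal 0 1) =
      3 * (∑ i, a i ^ 2) ^ 2 := by
  have h := integral_pow_add_two_gaussianReal 0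
  have h' := integral_pow_add_two_gaussianReal 2
  simp only [zero_add, pow_zero, integral_const] at h
  rw [h] at h'
  rw [integral_linearForm_pow, h', show (4 : ℕ) = 2 * 2 from rfl, pow_mul,
    Real.sq_sqrt (by positivity)]
  simp
  ring

end GaussianChaos

/-- A Paley–Zygmund inequality. -/
lemma paley_zygmund {Ω : Type*} [MeasurableSpace Ω] {μ : Measure Ω} [IsProbabilityMeasure μ]
    {Z : Ω → ℝ} (hm : Measurable Z) (h1 : Integrable Z μ) (h2 : Integrable (fun ω => Z ω ^ 2) μ)
    {s : ℝ} (hs : 0 < s) (hZ : ∫ ω, Z ω ∂μ = s) (hZ2 : ∫ ω, Z ω ^ 2 ∂μ ≤ 3 * s ^ 2) :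
    1 / 9 ≤ μ.real {ω | s / 2 < Z ω} := by
  have hS : MeasurableSet {ω | s / 2 < Z ω} := measurableSet_lt measurable_const hm
  have hpt : ∀ ω, 4 / (81 * s ^ 2) * (10 * s * Z ω - 19 / 4 * s ^ 2 - Z ω ^ 2) ≤
      Set.indicator {ω | s / 2 < Z ω} (fun _ => (1 : ℝ)) ω := by
    intro ω
    rw [div_mul_eq_mul_div, div_le_iff₀ (by positivity)]
    by_cases h : s / 2 < Z ω
    · rw [Set.indicator_of_mem (by exact h)]
      nlinarith [sq_nonneg (Z ω - 5 * s)]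
    · rw [Set.indicator_of_notMem (by exact h)]
      have h' : Z ω ≤ s / 2 := not_lt.mp h
      nlinarith [mul_nonneg (sub_nonneg.2 h') (by linarith : 0 ≤ 19 / 2 * s - Z ω)]
  have hint : Integrable (fun ω => 10 * s * Z ω - 19 / 4 * s ^ 2) μ :=
    (h1.const_mul _).sub (integrable_const _)
  have := integral_mono ((hint.sub h2).const_mul (4 / (81 * s ^ 2)))
    ((integrable_const (1 : ℝ)).indicator hS) hpt
  rw [integral_indicator_const _ hS, integral_const_mul] at this
  simp only [Pi.sub_apply] at this
  rw [integral_sub hint h2, integral_sub (h1.const_mul _) (integrable_const _),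
    integral_const_mul, hZ, integral_const, probReal_univ, smul_eq_mul, smul_eq_mul, mul_one,
    one_mul] at this
  refine le_trans ?_ this
  rw [div_mul_eq_mul_div, div_le_div_iff₀ (by norm_num) (by positivity)]
  nlinarith

/-- If the slices over `G` have measure at least `c`, the product measure is at least
`c * μ G`. -/
lemma mul_measure_le_prod {α β : Type*} [MeasurableSpace α] [MeasurableSpace β] (μ : Measure α)
    (ν : Measure β) [SFinite ν] {S : Set (α × β)} (hS : MeasurableSet S) {G : Set α}
    {c : ENNReal} (h : ∀ x ∈ G, c ≤ ν (Prod.mk x ⁻¹' S)) : c * μ G ≤ (μ.prod ν) S := by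
  rw [Measure.prod_apply hS]
  exact (mul_le_mul_right (measure_mono h) c).trans
    (mul_meas_ge_le_lintegral (measurable_measure_prodMk_left hS) c)

/-- Anticoncentration of a bilinear Gaussian chaos relative to a smaller linear form. -/
lemma bilinear_chaos_anticoncentration {ι κ : Type*} [Fintype ι] [Fintype κ] (A : ι → κ → ℝ)
    (v : ι → ℝ) {B : ℝ} (h : B ^ 2 * ∑ j, v j ^ 2 < ∑ j, ∑ i, A j i ^ 2) :
    ENNReal.ofReal (1 / 180) ≤
      ((Measure.pi fun _ : ι => gaussianReal 0 1).prod (Measure.pi fun _ : κ => gaussianReal 0 1))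
        {p | B * |∑ j, v j * p.1 j| < 9 * |∑ i, (∑ j, A j i * p.1 j) * p.2 i|} := by
  set μ := Measure.pi fun _ : ι => gaussianReal 0 1
  set ν := Measure.pi fun _ : κ => gaussianReal 0 1
  set s := ∑ j, ∑ i, A j i ^ 2 with hs
  set t := ∑ j, v j ^ 2 with ht
  have ht0 : 0 ≤ t := by positivity
  have hs0 : 0 < s := lt_of_le_of_lt (by positivity) h
  have hs' : s = ∑ i, ∑ j, A j i ^ 2 := Finset.sum_comm
  set σ : (ι → ℝ) → ℝ := fun z => ∑ i, (∑ j, A j i * z j) ^ 2 with hσ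
  have hσsq : ∀ z, σ z ^ 2 ≤
      s * ∑ i, (∑ j, A j i * z j) ^ 4 / (∑ j, A j i ^ 2) := by
    intro z
    rw [hs']
    refine Finset.sum_sq_le_sum_mul_sum_of_sq_le_mul _ (fun i _ => by positivity)
      (fun i _ => by positivity) fun i _ => ?_
    rcases eq_or_ne (∑ j, A j i ^ 2) 0 with h0 | h0
    · have : ∀ j, A j i = 0 := fun j => by
        have := (Finset.sum_eq_zero_iff_of_nonneg fun j _ => sq_nonneg (A j i)).1 h0 j
          (Finset.mem_univ j)
        simpa using this
      simp [this]
    · rw [mul_div_cancel₀ _ h0]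
      exact le_of_eq (by ring)
  have hdom : Integrable
      (fun z : ι → ℝ => s * ∑ i, (∑ j, A j i * z j) ^ 4 / (∑ j, A j i ^ 2)) μ :=
    (integrable_finsetSum _ fun i _ =>
      (integrable_linearForm_pow (fun j => A j i) 4).div_const _).const_mul s
  have hσm : Measurable σ := by fun_prop
  have hσ2 : Integrable (fun z => σ z ^ 2) μ :=
    hdom.mono' (by fun_prop) (ae_of_all _ fun z => by
      rw [Real.norm_of_nonneg (by positivity)]
      exact hσsq z)
  have hG1 : 1 / 9 ≤ μ.real {z | s / 2 < σ z} := by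
    refine paley_zygmund hσm
      (integrable_finsetSum _ fun i _ => integrable_linearForm_pow (fun j => A j i) 2)
      hσ2 hs0 ?_ ?_
    · rw [integral_finsetSum _ fun i _ => integrable_linearForm_pow (fun j => A j i) 2, hs']
      exact Finset.sum_congr rfl fun i _ => integral_linearForm_sq fun j => A j i
    · refine (integral_mono hσ2 hdom hσsq).trans ?_
      rw [integral_const_mul, integral_finsetSum _ fun i _ =>
        (integrable_linearForm_pow (fun j => A j i) 4).div_const _]
      have : ∀ i ∈ Finset.univ, ∫ z, (∑ j, A j i * z j) ^ 4 / (∑ j, A j i ^ 2) ∂μ ≤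
          3 * ∑ j, A j i ^ 2 := by
        intro i _
        rw [integral_div, integral_linearForm_pow_four fun j => A j i]
        rcases eq_or_ne (∑ j, A j i ^ 2) 0 with h0 | h0
        · simp [h0]
        · exact le_of_eq (by field_simp)
      have := Finset.sum_le_sum this
      rw [← Finset.mul_sum, ← hs'] at this
      nlinarith
  have hG2 : μ.real {z : ι → ℝ | 20 * t < (∑ j, v j * z j) ^ 2} ≤ 1 / 20 := by
    rcases eq_or_lt_of_le ht0 with h0 | h0
    · have hv : ∀ j, v j = 0 := fun j => by
        have := (Finset.sum_eq_zero_iff_of_nonneg fun j _ => sq_nonneg (v j)).1 h0.symm j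
          (Finset.mem_univ j)
        simpa using this
      simp [hv, ← h0]
    · have h1 := mul_meas_ge_le_integral_of_nonneg
        (ae_of_all _ fun z => sq_nonneg (∑ j, v j * z j)) (integrable_linearForm_pow v 2)
        (20 * t) (μ := μ)
      rw [integral_linearForm_sq v] at h1
      have h2 : μ.real {z : ι → ℝ | 20 * t < (∑ j, v j * z j) ^ 2} ≤
          μ.real {z : ι → ℝ | 20 * t ≤ (∑ j, v j * z j) ^ 2} :=
        measureReal_mono fun z hz => by
          rw [Set.mem_ofPred_eq] at hz ⊢
          exact hz.le
      rw [← ht] at h1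
      nlinarith
  set G := {z | s / 2 < σ z} \ {z : ι → ℝ | 20 * t < (∑ j, v j * z j) ^ 2}
  have hG : 1 / 20 ≤ μ.real G := by
    have := le_measureReal_sdiff (μ := μ) (s₁ := {z | s / 2 < σ z})
      (s₂ := {z : ι → ℝ | 20 * t < (∑ j, v j * z j) ^ 2})
    linarith
  have hS : MeasurableSet {p : (ι → ℝ) × (κ → ℝ) | B * |∑ j, v j * p.1 j| <
      9 * |∑ i, (∑ j, A j i * p.1 j) * p.2 i|} :=
    measurableSet_lt (by fun_prop) (by fun_prop)
  have key := mul_measure_le_prod μ ν hS (G := G) (c := ENNReal.ofReal (1 / 9)) (by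
    rintro z ⟨hz1, hz2⟩
    simp only [Set.mem_ofPred_eq, not_lt] at hz1 hz2
    set w : κ → ℝ := fun i => ∑ j, A j i * z j
    have hσz : 0 < σ z := by linarith
    have hp : 1 / 9 ≤ ν.real {y : κ → ℝ | σ z / 2 < (∑ i, w i * y i) ^ 2} := by
      refine paley_zygmund (by fun_prop) (integrable_linearForm_pow w 2) ?_ hσz
        (integral_linearForm_sq w) ?_
      · simpa only [← pow_mul] using integrable_linearForm_pow w 4
      · simp only [← pow_mul]
        exact (integral_linearForm_pow_four w).le
    refine (ENNReal.ofReal_le_ofReal hp).trans ?_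
    rw [ofReal_measureReal]
    refine measure_mono fun y hy => ?_
    simp only [Set.mem_ofPred_eq] at hy
    simp only [Set.mem_preimage, Set.mem_ofPred_eq]
    refine lt_of_pow_lt_pow_left₀ 2 (by positivity) ?_
    rw [mul_pow, mul_pow, sq_abs, sq_abs]
    nlinarith [mul_le_mul_of_nonneg_left hz2 (sq_nonneg B)])
  refine le_trans ?_ key
  rw [← ofReal_measureReal (s := G), ← ENNReal.ofReal_mul (by norm_num)]
  exact ENNReal.ofReal_le_ofReal (by linarith)

/-- The logarithmic derivative of a complex polynomial is small away from its roots. -/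
lemma norm_eval_derivative_le (P : Polynomial ℂ) {z : ℂ} {η : ℝ} (hη : 0 < η)
    (h : ∀ r ∈ P.roots, η ≤ ‖z - r‖) :
    ‖P.derivative.eval z‖ ≤ P.natDegree / η * ‖P.eval z‖ := by
  rcases eq_or_ne P 0 with rfl | hP
  · simp
  have hz : P.eval z ≠ 0 := fun hz => by
    have := h z ((Polynomial.mem_roots hP).2 hz)
    simp at this
    linarith
  rw [(IsAlgClosed.splits P).eval_derivative_eq_eval_mul_sum hz, norm_mul, mul_comm]
  refine mul_le_mul_of_nonneg_right ?_ (norm_nonneg _)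
  refine (Multiset.le_sum_of_subadditive norm norm_zero.le norm_add_le _).trans ?_
  rw [Multiset.map_map]
  refine (Multiset.sum_le_card_nsmul _ (1 / η) fun w hw => ?_).trans ?_
  · obtain ⟨r, hr, rfl⟩ := Multiset.mem_map.1 hw
    simp only [Function.comp_apply, norm_div, norm_one]
    exact one_div_le_one_div_of_le hη (h r hr)
  · rw [Multiset.card_map, nsmul_eq_mul, mul_one_div]
    gcongr
    exact_mod_cast P.card_roots'

/-- The set of angles in `[0, 1]` at which `exp (i θ)` is close to a given point is small. -/
lemma volume_angles_near_le (r : ℂ) (η : ℝ) :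
    volume {θ : ℝ | θ ∈ Set.Icc 0 1 ∧ ‖Complex.exp (Complex.I * θ) - r‖ < η} ≤
      ENNReal.ofReal (4 * η) := by
  refine (Real.volume_le_diam _).trans (Metric.ediam_le fun θ hθ φ hφ => ?_)
  rw [edist_dist]
  refine ENNReal.ofReal_le_ofReal ?_
  obtain ⟨⟨hθ0, hθ1⟩, hθ⟩ := hθ
  obtain ⟨⟨hφ0, hφ1⟩, hφ⟩ := hφ
  have h1 : ‖Complex.exp (Complex.I * θ) - Complex.exp (Complex.I * φ)‖ < 2 * η := by
    have := norm_sub_le_norm_sub_add_norm_sub (Complex.exp (Complex.I * θ)) r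
      (Complex.exp (Complex.I * φ))
    rw [norm_sub_rev r] at this
    linarith
  have h2 : ‖Complex.exp (Complex.I * θ) - Complex.exp (Complex.I * φ)‖ =
      |2 * Real.sin ((θ - φ) / 2)| := by
    have : Complex.exp (Complex.I * θ) - Complex.exp (Complex.I * φ) =
        Complex.exp (Complex.I * φ) * (Complex.exp (Complex.I * ((θ - φ : ℝ) : ℂ)) - 1) := by
      rw [mul_sub, ← Complex.exp_add]
      push_cast
      ring_nf
    rw [this, norm_mul, Complex.norm_exp_I_mul_ofReal, one_mul,
      Complex.norm_exp_I_mul_ofReal_sub_one, Real.norm_eq_abs]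
  have h3 : |θ - φ| ≤ 2 * |2 * Real.sin ((θ - φ) / 2)| := by
    have h4 : 2 / Real.pi * (|θ - φ| / 2) ≤ Real.sin (|θ - φ| / 2) :=
      Real.mul_le_sin (by positivity) (by
        have : |θ - φ| ≤ 1 := abs_le.2 ⟨by linarith, by linarith⟩
        linarith [Real.pi_gt_three])
    have h5 : Real.sin (|θ - φ| / 2) ≤ |Real.sin ((θ - φ) / 2)| := by
      rcases abs_cases (θ - φ) with ⟨h, -⟩ | ⟨h, -⟩
      · rw [h]; exact le_abs_self _
      · rw [h, neg_div, Real.sin_neg]; exact neg_le_abs _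
    have h6 : 1 / 2 ≤ 2 / Real.pi := by
      rw [div_le_div_iff₀ (by norm_num) Real.pi_pos]
      linarith [Real.pi_le_four]
    rw [abs_mul, abs_two]
    nlinarith [abs_nonneg (θ - φ)]
  rw [Real.dist_eq]
  linarith

/-- Along a circle, a real polynomial is a trigonometric polynomial. -/
lemma exists_polynomial_eval_circle {n d : ℕ} (f : MvPolynomial (Fin n) ℝ)
    (hf : f.totalDegree ≤ d) (x y : Fin n → ℝ) :
    ∃ P : Polynomial ℂ, P.natDegree ≤ 2 * d ∧ ∀ θ : ℝ,
      ((eval (fun i => Real.cos θ * x i + Real.sin θ * y i) f : ℝ) : ℂ) *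
        Complex.exp (Complex.I * θ) ^ d = P.eval (Complex.exp (Complex.I * θ)) := by
  let q : Fin n → Polynomial ℂ := fun i =>
    Polynomial.C ((x i - Complex.I * y i) / 2) * Polynomial.X ^ 2 +
      Polynomial.C ((x i + Complex.I * y i) / 2)
  have hm : ∀ m ∈ f.support, ∑ i, m i ≤ d := fun m hm => (sum_le_totalDegree hm).trans hf
  have hq : ∀ i, (q i).natDegree ≤ 2 := fun i => by
    simp only [q]
    compute_degree
  refine ⟨∑ m ∈ f.support, Polynomial.C ((coeff m f : ℝ) : ℂ) *
    (Polynomial.X ^ (d - ∑ i, m i) * ∏ i, q i ^ m i), ?_, fun θ => ?_⟩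
  · refine Polynomial.natDegree_sum_le_of_forall_le _ _ fun m hmf => ?_
    refine (Polynomial.natDegree_C_mul_le _ _).trans (Polynomial.natDegree_mul_le.trans ?_)
    rw [Polynomial.natDegree_X_pow]
    have h1 : (∏ i, q i ^ m i).natDegree ≤ ∑ i, m i * 2 :=
      (Polynomial.natDegree_prod_le _ _).trans (Finset.sum_le_sum fun i _ =>
        Polynomial.natDegree_pow_le.trans (Nat.mul_le_mul_left _ (hq i)))
    rw [← Finset.sum_mul] at h1
    have := hm m hmf
    omega
  · set e := Complex.exp (Complex.I * θ) with he
    have hev : ∀ i, (q i).eval e = e * (Real.cos θ * x i + Real.sin θ * y i) := by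
      intro i
      have h1 : e * Complex.exp (-(Complex.I * θ)) = 1 := by
        rw [he, ← Complex.exp_add, add_neg_cancel, Complex.exp_zero]
      simp only [q, Polynomial.eval_add, Polynomial.eval_mul, Polynomial.eval_C,
        Polynomial.eval_pow, Polynomial.eval_X, Complex.ofReal_cos, Complex.ofReal_sin,
        Complex.cos, Complex.sin]
      rw [show (θ : ℂ) * Complex.I = Complex.I * θ by ring,
        show -(θ : ℂ) * Complex.I = -(Complex.I * θ) by ring, ← he]
      linear_combination (-(x i + Complex.I * y i) / 2) * h1
    rw [eval_eq', Complex.ofReal_sum, Finset.sum_mul, Polynomial.eval_finsetSum]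
    refine Finset.sum_congr rfl fun m hmf => ?_
    rw [Polynomial.eval_mul, Polynomial.eval_C, Polynomial.eval_mul, Polynomial.eval_pow,
      Polynomial.eval_X, Polynomial.eval_prod]
    simp only [Polynomial.eval_pow, hev, mul_pow, Finset.prod_mul_distrib,
      Finset.prod_pow_eq_pow_sum]
    nth_rewrite 1 [← Nat.sub_add_cancel (hm m hmf)]
    push_cast
    ring

lemma hasDerivAt_eval_comp {n : ℕ} (f : MvPolynomial (Fin n) ℝ) {c : ℝ → Fin n → ℝ}
    {c' : Fin n → ℝ} {t : ℝ} (hc : ∀ i, HasDerivAt (fun s => c s i) (c' i) t) :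
    HasDerivAt (fun s => eval (c s) f) (∑ i, eval (c t) (pderiv i f) * c' i) t := by
  induction f using MvPolynomial.induction_on with
  | C r => simpa using hasDerivAt_const t r
  | add p q hp hq =>
    simpa [add_mul, Finset.sum_add_distrib] using hp.fun_add hq
  | mul_X p i hp =>
    have e : (fun s => eval (c s) (p * X i)) = fun s => eval (c s) p * c s i := by
      ext s
      simp
    rw [e]
    refine (hp.fun_mul (hc i)).congr_deriv (Eq.symm ?_)
    simp only [pderiv_mul, map_add, map_mul, eval_X, add_mul, Finset.sum_add_distrib, pderiv_X,
      Finset.sum_mul]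
    congr 1
    · exact Finset.sum_congr rfl fun j _ => by ring
    · rw [Finset.sum_eq_single i] <;> simp +contextual [Ne.symm]

/-- On most of the arc `[0, 1]`, a polynomial restricted to a circle is not much smaller than its
derivative. -/
lemma volume_derivative_large_le {n d : ℕ} (f : MvPolynomial (Fin n) ℝ)
    (hf : f.totalDegree ≤ d) (hd : 1 ≤ d) (x y : Fin n → ℝ) {M : ℝ} (hM : 3 * d ≤ M) :
    volume {θ : ℝ | θ ∈ Set.Icc 0 1 ∧
      M * |eval (fun i => Real.cos θ * x i + Real.sin θ * y i) f| <
        |∑ i, eval (fun i => Real.cos θ * x i + Real.sin θ * y i) (pderiv i f) *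
          (-Real.sin θ * x i + Real.cos θ * y i)|} ≤ ENNReal.ofReal (24 * d ^ 2 / M) := by
  have hd' : (1 : ℝ) ≤ d := by exact_mod_cast hd
  have hM0 : 0 < M := by linarith
  obtain ⟨P, hPd, hP⟩ := exists_polynomial_eval_circle f hf x y
  set η : ℝ := 3 * d / M with hη
  have hη0 : 0 < η := by positivity
  have hsub : {θ : ℝ | θ ∈ Set.Icc 0 1 ∧
      M * |eval (fun i => Real.cos θ * x i + Real.sin θ * y i) f| <
        |∑ i, eval (fun i => Real.cos θ * x i + Real.sin θ * y i) (pderiv i f) *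
          (-Real.sin θ * x i + Real.cos θ * y i)|} ⊆
      ⋃ r ∈ P.roots.toFinset,
        {θ : ℝ | θ ∈ Set.Icc 0 1 ∧ ‖Complex.exp (Complex.I * θ) - r‖ < η} := by
    rintro θ ⟨hθ, hlt⟩
    simp only [Set.mem_iUnion, Set.mem_ofPred_eq, Multiset.mem_toFinset, exists_prop]
    by_contra! hcon
    refine hlt.not_ge ?_
    set e := Complex.exp (Complex.I * θ) with he
    have hnorm : ‖e‖ = 1 := Complex.norm_exp_I_mul_ofReal θ
    have hPe := norm_eval_derivative_le P hη0 (z := e) fun r hr => hcon r hr hθ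
    set F : ℝ → ℝ := fun θ => eval (fun i => Real.cos θ * x i + Real.sin θ * y i) f
    have hF := hasDerivAt_eval_comp f
      (c := fun θ i => Real.cos θ * x i + Real.sin θ * y i)
      (c' := fun i => -Real.sin θ * x i + Real.cos θ * y i) (t := θ) fun i =>
        ((Real.hasDerivAt_cos θ).mul_const _).add ((Real.hasDerivAt_sin θ).mul_const _)
    set F' := ∑ i, eval (fun i => Real.cos θ * x i + Real.sin θ * y i) (pderiv i f) *
          (-Real.sin θ * x i + Real.cos θ * y i)
    have hexp : HasDerivAt (fun t : ℝ => Complex.exp (Complex.I * t)) (e * Complex.I) θ := by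
      have := ((hasDerivAt_id θ).ofReal_comp.const_mul Complex.I).cexp
      simpa using this
    have h1 := hF.ofReal_comp.mul (hexp.pow d)
    have h2 := (P.hasDerivAt e).comp θ hexp
    have h3 : (F' : ℂ) * e ^ d = P.derivative.eval e * (e * Complex.I) -
        (F θ : ℂ) * (d * e ^ (d - 1) * (e * Complex.I)) := by
      have hfun : ((fun s => ((eval (fun i => Real.cos s * x i + Real.sin s * y i) f : ℝ) : ℂ)) *
          (fun t : ℝ => Complex.exp (Complex.I * t)) ^ d) =
          (fun z => P.eval z) ∘ fun t : ℝ => Complex.exp (Complex.I * t) := by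
        ext s
        exact hP s
      rw [hfun] at h1
      rw [← h1.unique h2]
      simp [F, he]
    have h4 : ‖P.eval e‖ = |F θ| := by
      rw [← hP θ, norm_mul, norm_pow, hnorm, one_pow, mul_one, Complex.norm_real,
        Real.norm_eq_abs]
    have h5 := congrArg norm h3
    rw [norm_mul, norm_pow, hnorm, one_pow, mul_one, Complex.norm_real, Real.norm_eq_abs] at h5
    have h6 := norm_sub_le (P.derivative.eval e * (e * Complex.I))
      ((F θ : ℂ) * (d * e ^ (d - 1) * (e * Complex.I)))
    simp only [norm_mul, norm_pow, hnorm, Complex.norm_I, Complex.norm_real, one_pow, mul_one,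
      Complex.norm_natCast, Real.norm_eq_abs] at h6
    rw [h4] at hPe
    have h7 : (P.natDegree : ℝ) / η ≤ 2 / 3 * M := by
      rw [div_le_iff₀ hη0, hη]
      have : (P.natDegree : ℝ) ≤ 2 * d := by exact_mod_cast hPd
      calc (P.natDegree : ℝ) ≤ 2 * d := this
        _ = 2 / 3 * M * (3 * d / M) := by field_simp
    have h8 := mul_le_mul_of_nonneg_right h7 (abs_nonneg (F θ))
    have h9 := mul_le_mul_of_nonneg_right hM (abs_nonneg (F θ))
    rw [h5]
    change _ ≤ M * |F θ|
    linarith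
  refine (measure_mono hsub).trans ((measure_biUnion_finset_le _ _).trans ?_)
  refine (Finset.sum_le_card_nsmul _ _ (ENNReal.ofReal (4 * η)) fun r _ =>
    volume_angles_near_le r η).trans ?_
  rw [nsmul_eq_mul, ← ENNReal.ofReal_natCast, ← ENNReal.ofReal_mul (by positivity)]
  refine ENNReal.ofReal_le_ofReal ?_
  have hcard : ((P.roots.toFinset.card : ℕ) : ℝ) ≤ 2 * d := by
    exact_mod_cast (Multiset.toFinset_card_le _).trans (P.card_roots'.trans hPd)
  calc (P.roots.toFinset.card : ℝ) * (4 * η) ≤ 2 * d * (4 * η) := by gcongr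
    _ = 24 * d ^ 2 / M := by rw [hη]; ring

instance {n : ℕ} : IsProbabilityMeasure (gaussianN n) := by
  unfold gaussianN; infer_instance

lemma strongDual_apply_eq_sum {n : ℕ} (L : StrongDual ℝ (Fin n → ℝ)) (z : Fin n → ℝ) :
    L z = ∑ i, L (Pi.single i 1) * z i := by
  have h := LinearMap.pi_apply_eq_sum_univ (L : (Fin n → ℝ) →ₗ[ℝ] ℝ) z
  simp only [ContinuousLinearMap.coe_coe, smul_eq_mul] at h
  rw [h]
  refine Finset.sum_congr rfl fun i _ => ?_
  rw [mul_comm]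
  congr 2
  ext j
  simp [Pi.single_apply, eq_comm]

instance {n : ℕ} : IsGaussian (gaussianN n) := by
  refine isGaussian_of_map_eq_gaussianReal fun L => ?_
  have h := map_sum_mul_pi_gaussianReal fun i => L (Pi.single i 1)
  rw [gaussianReal_map_const_mul] at h
  simp only [← strongDual_apply_eq_sum] at h
  exact ⟨_, _, h⟩

lemma map_rotation_gaussianN (n : ℕ) (θ : ℝ) :
    ((gaussianN n).prod (gaussianN n)).map (ContinuousLinearMap.rotation θ) =
      (gaussianN n).prod (gaussianN n) := by
  refine IsGaussian.map_rotation_eq_self_of_forall_strongDual_eq_zero (fun L => ?_) θ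
  have h := integral_linearForm_pow (fun i => L (Pi.single i 1)) 1
  simp only [pow_one, integral_id_gaussianReal, mul_zero, ← strongDual_apply_eq_sum] at h
  exact h

/-- A low-degree polynomial is rarely much smaller than its directional derivative in a random
direction. -/
lemma derivative_relative_anticoncentration {n d : ℕ} (f : MvPolynomial (Fin n) ℝ)
    (hf : f.totalDegree ≤ d) (hd : 1 ≤ d) {M : ℝ} (hM : 0 < M) :
    ((gaussianN n).prod (gaussianN n))
      {p | M * |eval p.1 f| < |∑ i, eval p.1 (pderiv i f) * p.2 i|} ≤
        ENNReal.ofReal (24 * d ^ 2 / M) := by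
  have hd' : (1 : ℝ) ≤ d := by exact_mod_cast hd
  rcases lt_or_ge M (3 * d) with hlt | hge
  · refine prob_le_one.trans ?_
    rw [← ENNReal.ofReal_one]
    refine ENNReal.ofReal_le_ofReal ?_
    rw [le_div_iff₀ hM]
    nlinarith
  set S := {p : (Fin n → ℝ) × (Fin n → ℝ) |
    M * |eval p.1 f| < |∑ i, eval p.1 (pderiv i f) * p.2 i|}
  have hev : ∀ h : MvPolynomial (Fin n) ℝ,
      Continuous fun p : (Fin n → ℝ) × (Fin n → ℝ) => eval p.1 h :=
    fun h => (continuous_eval h).comp continuous_fst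
  have hS : MeasurableSet S := by
    refine IsOpen.measurableSet (isOpen_lt ?_ ?_)
    · exact continuous_const.mul (hev f).abs
    · exact (continuous_finsetSum _ fun i _ => (hev _).mul (by fun_prop)).abs
  set V := (volume : Measure ℝ).restrict (Set.Icc 0 1)
  have hV : V Set.univ = 1 := by simp [V]
  set μ := (gaussianN n).prod (gaussianN n)
  set T : Set (ℝ × ((Fin n → ℝ) × (Fin n → ℝ))) :=
    {q | ContinuousLinearMap.rotation q.1 q.2 ∈ S}
  have hT : MeasurableSet T := by
    refine hS.preimage (Continuous.measurable ?_)
    simp only [ContinuousLinearMap.rotation_apply]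
    fun_prop
  have h1 : (V.prod μ) T = μ S := by
    rw [Measure.prod_apply hT]
    have : ∀ θ, μ (Prod.mk θ ⁻¹' T) = μ S := fun θ => by
      have hr : μ.map (ContinuousLinearMap.rotation θ) = μ := map_rotation_gaussianN n θ
      conv_rhs => rw [← hr]
      rw [Measure.map_apply (ContinuousLinearMap.measurable _) hS]
      rfl
    simp [this, hV]
  rw [← h1, Measure.prod_apply_symm hT]
  have h2 : ∀ p, V ((fun θ => (θ, p)) ⁻¹' T) ≤ ENNReal.ofReal (24 * d ^ 2 / M) := fun p => by
    rw [Measure.restrict_apply' measurableSet_Icc]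
    refine le_trans (measure_mono ?_) (volume_derivative_large_le f hf hd p.1 p.2 hge)
    rintro θ ⟨hθT, hθ⟩
    exact ⟨hθ, hθT⟩
  refine (lintegral_mono h2).trans ?_
  simp

/-- The joint gradient of a tuple of low-degree polynomials is rarely much larger than the tuple
itself. -/
lemma gradient_relative_anticoncentration {n d : ℕ} {J : Type*} [Fintype J]
    (f : J → MvPolynomial (Fin n) ℝ) (hf : ∀ j, (f j).totalDegree ≤ d) (hd : 1 ≤ d) {B : ℝ}
    (hB : 0 < B) :
    gaussianN n {x | B ^ 2 * ∑ j, eval x (f j) ^ 2 < ∑ j, ∑ i, eval x (pderiv i (f j)) ^ 2} ≤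
      ENNReal.ofReal (38880 * d ^ 2 / B) := by
  set γ := gaussianN n with hγ
  set μ := Measure.pi fun _ : J => gaussianReal 0 1
  set S : Set ((Fin n → ℝ) × (J → ℝ) × (Fin n → ℝ)) := {q |
    B * |∑ j, eval q.1 (f j) * q.2.1 j| <
      9 * |∑ i, (∑ j, eval q.1 (pderiv i (f j)) * q.2.1 j) * q.2.2 i|} with hSdef
  have hev : ∀ h : MvPolynomial (Fin n) ℝ,
      Continuous fun q : (Fin n → ℝ) × (J → ℝ) × (Fin n → ℝ) => eval q.1 h :=
    fun h => (continuous_eval h).comp continuous_fst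
  have hS : MeasurableSet S := by
    refine IsOpen.measurableSet (isOpen_lt ?_ ?_)
    · exact continuous_const.mul
        (continuous_finsetSum _ fun j _ => (hev _).mul (by fun_prop)).abs
    · exact continuous_const.mul (continuous_finsetSum _ fun i _ =>
        (continuous_finsetSum _ fun j _ => (hev _).mul (by fun_prop)).mul (by fun_prop)).abs
  have hlower := mul_measure_le_prod γ (μ.prod γ) hS (c := ENNReal.ofReal (1 / 180))
    (G := {x | B ^ 2 * ∑ j, eval x (f j) ^ 2 < ∑ j, ∑ i, eval x (pderiv i (f j)) ^ 2})
    fun x hx => bilinear_chaos_anticoncentration _ _ hx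
  have hupper : (γ.prod (μ.prod γ)) S ≤ ENNReal.ofReal (216 * d ^ 2 / B) := by
    have hassoc : Measurable fun r : ((Fin n → ℝ) × (J → ℝ)) × (Fin n → ℝ) =>
        (r.1.1, r.1.2, r.2) := by fun_prop
    have hmeas : AEMeasurable (Function.uncurry fun (x : Fin n → ℝ) (z : J → ℝ) =>
        γ {y | (x, z, y) ∈ S}) (γ.prod μ) :=
      (measurable_measure_prodMk_left (hS.preimage hassoc)).aemeasurable
    have hswap : (γ.prod (μ.prod γ)) S = ∫⁻ z, (γ.prod γ) {p | (p.1, z, p.2) ∈ S} ∂μ := by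
      calc (γ.prod (μ.prod γ)) S = ∫⁻ x, ∫⁻ z, γ {y | (x, z, y) ∈ S} ∂μ ∂γ := by
            rw [Measure.prod_apply hS]
            refine lintegral_congr fun x => ?_
            rw [Measure.prod_apply (hS.preimage measurable_prodMk_left)]
            rfl
        _ = ∫⁻ z, ∫⁻ x, γ {y | (x, z, y) ∈ S} ∂γ ∂μ := lintegral_lintegral_swap hmeas
        _ = _ := by
            refine lintegral_congr fun z => ?_
            have : Measurable fun p : (Fin n → ℝ) × (Fin n → ℝ) => (p.1, z, p.2) := by fun_prop
            exact (Measure.prod_apply (hS.preimage this)).symm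
    rw [hswap]
    have hz : ∀ z, (γ.prod γ) {p | (p.1, z, p.2) ∈ S} ≤ ENNReal.ofReal (216 * d ^ 2 / B) := by
      intro z
      have hdeg : (∑ j, C (z j) * f j).totalDegree ≤ d := by
        refine totalDegree_finsetSum_le fun j _ => ?_
        refine (totalDegree_mul _ _).trans ?_
        rw [totalDegree_C, zero_add]
        exact hf j
      have h := derivative_relative_anticoncentration _ hdeg hd
        (div_pos hB (by norm_num : (0 : ℝ) < 9))
      have e : (24 * d ^ 2 / (B / 9) : ℝ) = 216 * d ^ 2 / B := by
        field_simp
        norm_num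
      rw [e] at h
      refine le_trans (measure_mono ?_) h
      rintro ⟨x, y⟩ hxy
      simp only [hSdef, Set.mem_ofPred_eq, map_sum, map_mul, eval_C, pderiv_C_mul] at hxy ⊢
      simp only [mul_comm (z _)]
      linarith
    refine (lintegral_mono hz).trans ?_
    simp
  have h := hlower.trans hupper
  have e : ENNReal.ofReal (216 * d ^ 2 / B) =
      ENNReal.ofReal (1 / 180) * ENNReal.ofReal (38880 * d ^ 2 / B) := by
    rw [← ENNReal.ofReal_mul (by norm_num)]
    congr 1
    ring
  rw [e] at h
  exact (ENNReal.mul_le_mul_iff_right (by simp) ENNReal.ofReal_ne_top).1 h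

/-- The Hermite weight of `g` at level `k`. -/
noncomputable def hermiteWeight {n : ℕ} (g : MvPolynomial (Fin n) ℝ) (k : ℕ) : ℝ :=
  ∑ α ∈ Finset.piAntidiag Finset.univ k, hermiteCoeff g α ^ 2

/-- The next Hermite level of a zoom is controlled by the gradient of the current one. -/
lemma hermiteWeight_zoom_succ_le {n : ℕ} (g : MvPolynomial (Fin n) ℝ) {lam : ℝ} (h0 : 0 ≤ lam)
    (h1 : lam ≤ 1) (x : Fin n → ℝ) (k : ℕ) :
    (1 - lam) * hermiteWeight (zoom g lam x) (k + 1) ≤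
      lam * ∑ α ∈ Finset.piAntidiag Finset.univ k,
        ∑ i, eval x (pderiv i (zoomCoeff √(1 - lam) √lam g α)) ^ 2 := by
  have hder : ∀ (α : Fin n → ℕ) i,
      (1 - lam) * hermiteCoeff (zoom g lam x) (α + Pi.single i 1) ^ 2 ≤
        lam * eval x (pderiv i (zoomCoeff √(1 - lam) √lam g α)) ^ 2 := by
    intro α i
    have h := congrArg (eval x) (C_mul_pderiv_zoomCoeff √(1 - lam) √lam g α i)
    simp only [map_mul, eval_C, eval_zoomCoeff] at h
    have h' := congrArg (· ^ 2) h
    simp only [mul_pow, Real.sq_sqrt h0, Real.sq_sqrt (sub_nonneg.2 h1),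
      Real.sq_sqrt (by positivity : (0 : ℝ) ≤ (α i : ℝ) + 1)] at h'
    rw [h']
    have : 0 ≤ (1 - lam) * hermiteCoeff (zoom g lam x) (α + Pi.single i 1) ^ 2 * α i :=
      mul_nonneg (mul_nonneg (sub_nonneg.2 h1) (sq_nonneg _)) (Nat.cast_nonneg _)
    linarith
  have hsub : Finset.piAntidiag Finset.univ (k + 1) ⊆
      (Finset.piAntidiag Finset.univ k ×ˢ Finset.univ).image
        fun p : (Fin n → ℕ) × Fin n => p.1 + Pi.single p.2 1 := by
    intro α hα
    simp only [Finset.mem_piAntidiag, Finset.mem_univ, implies_true, and_true] at hα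
    change ∑ i, α i = k + 1 at hα
    obtain ⟨i, -, hi⟩ := Finset.exists_ne_zero_of_sum_ne_zero
      (show ∑ i, α i ≠ 0 by omega)
    have hle : Pi.single i 1 ≤ α := by
      rw [Pi.le_def]
      intro j
      rcases eq_or_ne j i with rfl | hj
      · simp only [Pi.single_eq_same]; omega
      · simp [hj]
    refine Finset.mem_image.2 ⟨(α - Pi.single i 1, i), ?_, tsub_add_cancel_of_le hle⟩
    simp only [Finset.mem_product, Finset.mem_piAntidiag, Finset.mem_univ, implies_true, and_true]
    have : ∑ j, ((α - Pi.single i 1 : Fin n → ℕ) j + (Pi.single i 1 : Fin n → ℕ) j) = k + 1 := by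
      rw [← hα]
      exact Finset.sum_congr rfl fun j _ => Nat.sub_add_cancel (hle j)
    rw [Finset.sum_add_distrib, Finset.sum_pi_single'] at this
    simpa using this
  rw [hermiteWeight, Finset.mul_sum, Finset.mul_sum]
  calc ∑ α ∈ Finset.piAntidiag Finset.univ (k + 1),
        (1 - lam) * hermiteCoeff (zoom g lam x) α ^ 2
      ≤ ∑ α ∈ (Finset.piAntidiag Finset.univ k ×ˢ Finset.univ).image
          fun p : (Fin n → ℕ) × Fin n => p.1 + Pi.single p.2 1,
          (1 - lam) * hermiteCoeff (zoom g lam x) α ^ 2 :=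
        Finset.sum_le_sum_of_subset_of_nonneg hsub fun α _ _ =>
          mul_nonneg (sub_nonneg.2 h1) (sq_nonneg _)
    _ ≤ ∑ p ∈ Finset.piAntidiag Finset.univ k ×ˢ Finset.univ,
          (1 - lam) * hermiteCoeff (zoom g lam x) (p.1 + Pi.single p.2 1) ^ 2 :=
        Finset.sum_image_le_of_nonneg fun α _ => mul_nonneg (sub_nonneg.2 h1) (sq_nonneg _)
    _ ≤ _ := by
        rw [Finset.sum_product]
        refine Finset.sum_le_sum fun α _ => ?_
        rw [Finset.mul_sum]
        exact Finset.sum_le_sum fun i _ => hder α i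

/-- Except on a small event, each Hermite level of a zoom is controlled by the previous one. -/
lemma measure_hermiteWeight_zoom_succ_le {n d : ℕ} (g : MvPolynomial (Fin n) ℝ)
    (hg : g.totalDegree ≤ d) (hd : 1 ≤ d) {lam : ℝ} (h0 : 0 ≤ lam) (h1 : lam ≤ 1) {B : ℝ}
    (hB : 0 < B) (k : ℕ) :
    gaussianN n {x | lam * B ^ 2 * hermiteWeight (zoom g lam x) k <
      (1 - lam) * hermiteWeight (zoom g lam x) (k + 1)} ≤
        ENNReal.ofReal (38880 * d ^ 2 / B) := by
  refine le_trans (measure_mono fun x hx => ?_) (gradient_relative_anticoncentration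
    (fun α : Finset.piAntidiag (Finset.univ : Finset (Fin n)) k =>
      zoomCoeff √(1 - lam) √lam g α)
    (fun α => (totalDegree_zoomCoeff_le _ _ _ _).trans hg) hd hB)
  have h := lt_of_lt_of_le (Set.mem_ofPred_eq.le hx)
    (hermiteWeight_zoom_succ_le g h0 h1 x k)
  rw [mul_assoc] at h
  have h' := lt_of_mul_lt_mul_left h h0
  rw [hermiteWeight] at h'
  simp only [Set.mem_ofPred_eq, eval_zoomCoeff]
  rw [Finset.sum_coe_sort _ fun α => hermiteCoeff (zoom g lam x) α ^ 2,
    Finset.sum_coe_sort _ fun α =>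
      ∑ i, eval x (pderiv i (zoomCoeff √(1 - lam) √lam g α)) ^ 2]
  exact h'

lemma hermiteWeight_nonneg {n : ℕ} (g : MvPolynomial (Fin n) ℝ) (k : ℕ) :
    0 ≤ hermiteWeight g k :=
  Finset.sum_nonneg fun _ _ => sq_nonneg _

/-- The hypervariance of a zoom as a finite sum over Hermite levels. -/
lemma hyperVar_zoom {n d : ℕ} (g : MvPolynomial (Fin n) ℝ) (hg : g.totalDegree ≤ d) (R lam : ℝ)
    (x : Fin n → ℝ) :
    hyperVar R (zoom g lam x) =
      ∑ k ∈ Finset.range d, R ^ (2 * (k + 1)) * hermiteWeight (zoom g lam x) (k + 1) := by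
  set s := (Finset.range d).biUnion fun k =>
    Finset.piAntidiag (Finset.univ : Finset (Fin n)) (k + 1)
  have hmem : ∀ α, α ∈ s ↔ 1 ≤ ∑ i, α i ∧ ∑ i, α i ≤ d := by
    intro α
    simp only [s, Finset.mem_biUnion, Finset.mem_range, Finset.mem_piAntidiag, Finset.mem_univ,
      implies_true, and_true]
    constructor
    · rintro ⟨k, hk, hα⟩
      change ∑ i, α i = k + 1 at hα
      omega
    · rintro ⟨h1, h2⟩
      exact ⟨∑ i, α i - 1, by omega, (Nat.sub_add_cancel h1).symm⟩
  rw [hyperVar, hyperVarGE, tsum_eq_sum (s := s)]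
  · rw [Finset.sum_biUnion]
    · refine Finset.sum_congr rfl fun k _ => ?_
      rw [hermiteWeight, Finset.mul_sum]
      refine Finset.sum_congr rfl fun α hα => ?_
      rw [(Finset.mem_piAntidiag.1 hα).1, if_pos (by omega)]
    · intro k _ l _ hkl
      rw [Function.onFun, Finset.disjoint_left]
      intro α hα hα'
      rw [Finset.mem_piAntidiag] at hα hα'
      omega
  · intro α hα
    rw [hmem, not_and, not_le] at hα
    split_ifs with h
    · rw [← eval_zoomCoeff, zoomCoeff_eq_zero _ _ (hg.trans_lt (hα h))]
      simp
    · rfl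

lemma integrable_eval_gaussianN {n : ℕ} (f : MvPolynomial (Fin n) ℝ) :
    Integrable (fun x => eval x f) (gaussianN n) := by
  simp only [eval_eq']
  refine integrable_finsetSum _ fun m _ => Integrable.const_mul ?_ _
  refine Integrable.fintype_prod (f := fun i (t : ℝ) => t ^ m i) fun i => ?_
  simpa using integrable_eval_gaussianReal (Polynomial.X ^ m i)

lemma hermiteWeight_zero_le {n : ℕ} (f : MvPolynomial (Fin n) ℝ) :
    hermiteWeight f 0 ≤ norm2sq f := by
  have h1 : ∀ x : Fin n → ℝ, hermiteMv 0 x = 1 := fun x => by simp [hermiteMv, hermiteFn]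
  have h2 : hermiteWeight f 0 = (∫ x, eval x f ∂(gaussianN n)) ^ 2 := by
    simp [hermiteWeight, hermiteCoeff, hermiteCoeffF, h1]
  have h3 : Integrable (fun x => eval x f ^ 2) (gaussianN n) :=
    (integrable_eval_gaussianN (f ^ 2)).congr (ae_of_all _ fun x => map_pow (eval x) f 2)
  set m := ∫ x, eval x f ∂(gaussianN n)
  have h4 : 0 ≤ ∫ x, (eval x f - m) ^ 2 ∂(gaussianN n) :=
    integral_nonneg fun x => sq_nonneg _
  have e : ∀ x, (eval x f - m) ^ 2 = eval x f ^ 2 - 2 * m * eval x f + m ^ 2 := fun x => by ring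
  simp only [e] at h4
  rw [integral_add (by exact h3.sub ((integrable_eval_gaussianN f).const_mul _))
      (integrable_const _),
    integral_sub h3 ((integrable_eval_gaussianN f).const_mul _), integral_const_mul,
    integral_const] at h4
  simp only [probReal_univ, one_smul] at h4
  rw [h2, norm2sq]
  change 0 ≤ _ - 2 * m * m + _ at h4
  linarith

/-- If consecutive Hermite levels decay geometrically, the zoom is attenuated. -/
lemma sum_pow_mul_le_of_geometric {V : ℕ → ℝ} {d : ℕ} {r ρ : ℝ} (hr : 0 ≤ r)
    (hρ0 : 0 ≤ ρ) (hρ : ρ ≤ 1 / 2) (hV0 : 0 ≤ V 0)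
    (h : ∀ k < d, r * V (k + 1) ≤ ρ * V k) :
    ∑ k ∈ Finset.range d, r ^ (k + 1) * V (k + 1) ≤ 2 * ρ * V 0 := by
  have hk : ∀ k ≤ d, r ^ k * V k ≤ ρ ^ k * V 0 := by
    intro k
    induction k with
    | zero => simp
    | succ k ih =>
      intro hkd
      have h1 := mul_le_mul_of_nonneg_left (h k hkd) (pow_nonneg hr k)
      have h2 := mul_le_mul_of_nonneg_left (ih (by omega)) hρ0
      rw [pow_succ, pow_succ]
      linarith
  have hgeom : ∑ k ∈ Finset.range d, ρ ^ k ≤ 2 := by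
    have hlt : ρ < 1 := by linarith
    calc ∑ k ∈ Finset.range d, ρ ^ k ≤ ∑' k, ρ ^ k :=
          (summable_geometric_of_lt_one hρ0 hlt).sum_le_tsum _ fun k _ => pow_nonneg hρ0 k
      _ = (1 - ρ)⁻¹ := tsum_geometric_of_lt_one hρ0 hlt
      _ ≤ 2 := by
          rw [inv_le_comm₀ (by linarith) (by norm_num)]
          linarith
  calc ∑ k ∈ Finset.range d, r ^ (k + 1) * V (k + 1)
      ≤ ∑ k ∈ Finset.range d, ρ ^ k * (ρ * V 0) :=
        Finset.sum_le_sum fun k hkd => by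
          have := hk (k + 1) (Finset.mem_range.1 hkd)
          rw [pow_succ ρ] at this
          linarith
    _ = (∑ k ∈ Finset.range d, ρ ^ k) * (ρ * V 0) := by rw [Finset.sum_mul]
    _ ≤ 2 * (ρ * V 0) := by gcongr
    _ = 2 * ρ * V 0 := by ring

/-- A zoom at a polynomially small scale is attenuated with high probability. -/
lemma zoom_attenuated {n d : ℕ} (g : MvPolynomial (Fin n) ℝ) (hg : g.totalDegree ≤ d)
    (hd : 1 ≤ d) {R ε β lam : ℝ} (hR : 1 ≤ R) (hε : 0 < ε) (hε1 : ε ≤ 1) (hβ : 0 < β)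
    (h0 : 0 ≤ lam) (h1 : lam ≤ 1 / 2)
    (hlam : lam ≤ ε / R ^ 2 * (1 / 4 * (β / (38880 * d ^ 3)) ^ 2)) :
    gaussianN n {x | ¬ (hyperVar R (zoom g lam x) ≤ ε * norm2sq (zoom g lam x))} ≤
      ENNReal.ofReal β := by
  have hd0 : (0 : ℝ) < d := by exact_mod_cast hd
  set B : ℝ := 38880 * d ^ 3 / β with hB
  have hB0 : 0 < B := by positivity
  have hρ : R ^ 2 * (lam * B ^ 2 / (1 - lam)) ≤ ε / 2 := by
    have h2 : R ^ 2 * (lam * B ^ 2) ≤ ε / 4 := by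
      calc R ^ 2 * (lam * B ^ 2)
          ≤ R ^ 2 * (ε / R ^ 2 * (1 / 4 * (β / (38880 * d ^ 3)) ^ 2) * B ^ 2) := by gcongr
        _ = ε / 4 := by rw [hB]; field_simp
    rw [mul_div_assoc', div_le_iff₀ (by linarith)]
    nlinarith
  refine le_trans (measure_mono (t := ⋃ k ∈ Finset.range d,
    {x | lam * B ^ 2 * hermiteWeight (zoom g lam x) k <
      (1 - lam) * hermiteWeight (zoom g lam x) (k + 1)}) fun x hx => ?_) ?_
  · by_contra hcon
    simp only [Set.mem_iUnion, Finset.mem_range, Set.mem_ofPred_eq, not_exists, not_lt] at hcon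
    refine hx ?_
    rw [hyperVar_zoom g hg]
    simp only [pow_mul]
    have hV0 := hermiteWeight_nonneg (zoom g lam x) 0
    refine (sum_pow_mul_le_of_geometric (V := hermiteWeight (zoom g lam x)) (sq_nonneg R)
      (ρ := R ^ 2 * (lam * B ^ 2 / (1 - lam))) ?_ (by linarith) hV0 fun k hk => ?_).trans ?_
    · have : 0 < 1 - lam := by linarith
      positivity
    · rw [mul_assoc]
      refine mul_le_mul_of_nonneg_left ?_ (sq_nonneg R)
      rw [div_mul_eq_mul_div, le_div_iff₀ (by linarith), mul_comm]
      exact hcon k hk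
    · exact mul_le_mul (by linarith) (hermiteWeight_zero_le _) hV0 hε.le
  · refine (measure_biUnion_finset_le _ _).trans ((Finset.sum_le_sum fun k _ =>
      measure_hermiteWeight_zoom_succ_le g hg hd h0 (by linarith) hB0 k).trans ?_)
    rw [Finset.sum_const, Finset.card_range, nsmul_eq_mul, ← ENNReal.ofReal_natCast,
      ← ENNReal.ofReal_mul (by positivity)]
    refine ENNReal.ofReal_le_ofReal (le_of_eq ?_)
    rw [hB]
    field_simp

/-- The quasi-polynomial scale is below a polynomial one. -/
lemma rpow_log_le {d : ℕ} (hd : 2 ≤ d) {β : ℝ} (hβ : 0 < β) (hβ1 : β < 1) :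
    (β / d) ^ (40 / Real.log 2 * Real.log d) ≤ 1 / 4 * (β / (38880 * d ^ 3)) ^ 2 := by
  have hd2 : (2 : ℝ) ≤ d := by exact_mod_cast hd
  have hlog : 0 < Real.log 2 := Real.log_pos (by norm_num)
  have hq0 : 0 < β / d := by positivity
  have hq : β / d ≤ 1 / 2 := by
    rw [div_le_div_iff₀ (by linarith) (by norm_num)]
    linarith
  calc (β / d) ^ (40 / Real.log 2 * Real.log d)
      ≤ (β / d) ^ ((40 : ℕ) : ℝ) := by
        refine Real.rpow_le_rpow_of_exponent_ge hq0 (by linarith) ?_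
        rw [div_mul_eq_mul_div, le_div_iff₀ hlog]
        have := Real.log_le_log (by norm_num) hd2
        push_cast
        linarith
    _ = (β / d) ^ 34 * (β / d) ^ 6 := by rw [Real.rpow_natCast, ← pow_add]
    _ ≤ (1 / 2) ^ 34 * (β ^ 2 / d ^ 6) := by
        rw [div_pow β _ 6]
        have : β ^ 6 ≤ β ^ 2 := pow_le_pow_of_le_one hβ.le hβ1.le (by norm_num)
        gcongr
    _ ≤ 1 / 4 * (β / (38880 * d ^ 3)) ^ 2 := by
        have e : (1 : ℝ) / 4 * (β / (38880 * d ^ 3)) ^ 2 =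
            1 / 4 / 38880 ^ 2 * (β ^ 2 / d ^ 6) := by
          field_simp
        rw [e]
        gcongr
        norm_num

/-- Local hyperconcentration theorem for a single polynomial: there is a universal
constant `C` such that for a degree-`d` polynomial `g` (`d ≥ 2`), `R ≥ 1`, `0 < ε ≤ 1`,
`0 < β < 1`, and `0 ≤ λ ≤ (ε/R²)·(β/d)^{C·log d}`, for `x ∼ N(0,1)^n`, except with
probability at most `β`, the zoom `g_{λ|x}` is `(R,ε)`-attenuated, i.e.
`HyperVar_R[g_{λ|x}] ≤ ε·‖g_{λ|x}‖₂²`. -/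
theorem local_hyperconcentration_single :
    ∃ C : ℝ, ∀ (n d : ℕ), 2 ≤ d →
      ∀ g : MvPolynomial (Fin n) ℝ, g.totalDegree ≤ d →
      ∀ R ε β lam : ℝ, 1 ≤ R → 0 < ε → ε ≤ 1 → 0 < β → β < 1 →
      0 ≤ lam → lam ≤ (ε / R ^ 2) * (β / d) ^ (C * Real.log d) →
      gaussianN n {x | ¬ (hyperVar R (zoom g lam x) ≤ ε * norm2sq (zoom g lam x))} ≤
        ENNReal.ofReal β := by
  refine ⟨40 / Real.log 2, fun n d hd g hg R ε β lam hR hε hε1 hβ hβ1 h0 hlam => ?_⟩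
  have h := hlam.trans
    (mul_le_mul_of_nonneg_left (rpow_log_le hd hβ hβ1) (by positivity : 0 ≤ ε / R ^ 2))
  have hd1 : (1 : ℝ) ≤ d := by exact_mod_cast (by omega : 1 ≤ d)
  refine zoom_attenuated g hg (by omega) hR hε hε1 hβ h0 (h.trans ?_) h
  have h1 : ε / R ^ 2 ≤ 1 := by
    rw [div_le_one (by positivity)]
    nlinarith
  have h2 : (β / (38880 * d ^ 3)) ^ 2 ≤ 1 := by
    refine pow_le_one₀ (by positivity) ?_
    rw [div_le_one (by positivity)]
    have := one_le_pow₀ hd1 (n := 3)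
    linarith
  have h3 : 0 ≤ 1 / 4 * (β / (38880 * d ^ 3)) ^ 2 := by positivity
  have h4 := mul_le_mul_of_nonneg_right h1 h3
  linarith
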